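/- For every τ in the complex upper half-plane at which ζ(τ) ∉ {0, 1, −1, −2, −1/2}, the logarithmic derivative of φ5 satisfies φ5′(τ)/φ5(τ) = [(ζ²+ζ+1)²/(3(2ζ+1)ζ(ζ+1)(ζ−1)(ζ+2))]·ζ′(τ), where ζ = ζ(τ) and ′ denotes d/dτ. -/

import Mathlib

open Complex

/-- The theta product θ(x;p) = ∏_{j≥0} (1 - pʲx)(1 - pʲ⁺¹x⁻¹). -/
noncomputable def jtheta (x p : ℂ) : ℂ :=
  ∏' j : ℕ, ((1 - p ^ j * x) * (1 - p ^ (j + 1) * x⁻¹))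

/-- Dedekind's eta function η(τ) = e^{πiτ/12} ∏_{j≥1} (1 - e^{2πijτ}). -/
noncomputable def dedekindEta (τ : ℂ) : ℂ :=
  Complex.exp ((Real.pi : ℂ) * Complex.I * τ / 12) *
    ∏' j : ℕ, (1 - Complex.exp (2 * (Real.pi : ℂ) * Complex.I * (j + 1) * τ))

/-- The eta quotient φ₁ = η(τ/2)²/η(τ)². -/
noncomputable def phi1 (τ : ℂ) : ℂ := dedekindEta (τ / 2) ^ 2 / dedekindEta τ ^ 2

/-- The eta quotient φ₂ = η(2τ)²/η(τ)². -/
noncomputable def phi2 (τ : ℂ) : ℂ := dedekindEta (2 * τ) ^ 2 / dedekindEta τ ^ 2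

/-- The eta quotient φ₃ = η(3τ/2)/η(τ/2). -/
noncomputable def phi3 (τ : ℂ) : ℂ := dedekindEta (3 * τ / 2) / dedekindEta (τ / 2)

/-- The eta quotient φ₄ = η(6τ)/η(2τ). -/
noncomputable def phi4 (τ : ℂ) : ℂ := dedekindEta (6 * τ) / dedekindEta (2 * τ)

/-- The eta quotient φ₅ = η(3τ)/η(τ). -/
noncomputable def phi5 (τ : ℂ) : ℂ := dedekindEta (3 * τ) / dedekindEta τ

/-- The Hauptmodul ζ(τ) = ω²θ(-1;p²)θ(-pω;p²)/(θ(-p;p²)θ(-ω;p²)),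
with p = e^{πiτ} and ω = e^{2πi/3}. -/
noncomputable def hauptmodul (τ : ℂ) : ℂ :=
  let p := Complex.exp ((Real.pi : ℂ) * Complex.I * τ)
  let ω := Complex.exp (2 * (Real.pi : ℂ) * Complex.I / 3)
  ω ^ 2 * jtheta (-1) (p ^ 2) * jtheta (-(p * ω)) (p ^ 2)
    / (jtheta (-p) (p ^ 2) * jtheta (-ω) (p ^ 2))

/-! ### q-shifted factorials -/

/-- The infinite q-shifted factorial. -/
noncomputable def qf (q x : ℂ) : ℂ := ∏' j : ℕ, (1 - q ^ j * x)

lemma qf_summable {q : ℂ} (hq : ‖q‖ < 1) (x : ℂ) : Summable fun j : ℕ => ‖-(q ^ j * x)‖ := by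
  simp only [norm_neg, norm_mul, norm_pow]
  exact (summable_geometric_of_lt_one (norm_nonneg _) hq).mul_right _

lemma qf_mult {q : ℂ} (hq : ‖q‖ < 1) (x : ℂ) : Multipliable fun j : ℕ => (1 - q ^ j * x) := by
  have := multipliable_one_add_of_summable (qf_summable hq x)
  simpa [sub_eq_add_neg] using this

lemma qf_ne_zero {q : ℂ} (hq : ‖q‖ < 1) (x : ℂ) (h : ∀ j : ℕ, 1 - q ^ j * x ≠ 0) :
    qf q x ≠ 0 := by
  have := tprod_one_add_ne_zero_of_summable (f := fun j : ℕ => -(q ^ j * x))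
    (by simpa [sub_eq_add_neg] using h) (qf_summable hq x)
  simpa [qf, sub_eq_add_neg] using this

lemma one_sub_qpow_ne {q : ℂ} (hq : ‖q‖ < 1) (j : ℕ) : 1 - q ^ (j + 1) ≠ 0 := by
  intro h
  have h1 : q ^ (j+1) = 1 := (sub_eq_zero.mp h).symm
  have h2 : ‖q‖ ^ (j+1) = 1 := by rw [← norm_pow, h1, norm_one]
  exact absurd h2 (pow_lt_one₀ (norm_nonneg _) hq (by simp)).ne

lemma qf_self_ne_zero {q : ℂ} (hq : ‖q‖ < 1) : qf q q ≠ 0 :=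
  qf_ne_zero hq q fun j => by
    have := one_sub_qpow_ne hq j
    rwa [pow_succ] at this

lemma qf_step {q : ℂ} (hq : ‖q‖ < 1) (x : ℂ) : qf q x = (1 - x) * qf q (q * x) := by
  unfold qf
  have h := qf_mult hq (q * x)
  have h' : Multipliable fun j : ℕ => (1 - q ^ (j+1) * x) := by
    convert h using 2 with j
    ring
  rw [tprod_eq_zero_mul' (f := fun j : ℕ => 1 - q ^ j * x) h']
  simp only [pow_zero, one_mul]
  congr 1
  apply tprod_congr
  intro j
  ring

lemma norm_sq_lt {q : ℂ} (hq : ‖q‖ < 1) : ‖q ^ 2‖ < 1 := by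
  rw [norm_pow]; exact pow_lt_one₀ (norm_nonneg _) hq (by simp)

lemma norm_cube_lt {q : ℂ} (hq : ‖q‖ < 1) : ‖q ^ 3‖ < 1 := by
  rw [norm_pow]; exact pow_lt_one₀ (norm_nonneg _) hq (by simp)

lemma qf_split {q : ℂ} (hq : ‖q‖ < 1) (x : ℂ) :
    qf (q ^ 2) x * qf (q ^ 2) (q * x) = qf q x := by
  unfold qf
  have h0 := qf_mult (norm_sq_lt hq) x
  have h1 := qf_mult (norm_sq_lt hq) (q * x)
  rw [← tprod_even_mul_odd (f := fun j : ℕ => (1 - q ^ j * x))]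
  · congr 1
    · apply tprod_congr; intro j; ring
    · apply tprod_congr; intro j; ring
  · convert h0 using 2 with j; ring
  · convert h1 using 2 with j; ring

lemma qf_neg {q : ℂ} (hq : ‖q‖ < 1) (x : ℂ) :
    qf q x * qf q (-x) = qf (q ^ 2) (x ^ 2) := by
  unfold qf
  rw [← (qf_mult hq x).tprod_mul (qf_mult hq (-x))]
  apply tprod_congr; intro j; ring

lemma qf_cube {q w : ℂ} (hq : ‖q‖ < 1) (hw : w ^ 2 + w + 1 = 0) (x : ℂ) :
    qf q x * qf q (w * x) * qf q (w ^ 2 * x) = qf (q ^ 3) (x ^ 3) := by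
  unfold qf
  rw [← (qf_mult hq x).tprod_mul (qf_mult hq (w * x)),
    ← ((qf_mult hq x).mul (qf_mult hq (w * x))).tprod_mul (qf_mult hq (w ^ 2 * x))]
  apply tprod_congr; intro j
  have hw3 : w ^ 3 = 1 := by linear_combination (w - 1) * hw
  have e : (q ^ 3) ^ j = (q ^ j) ^ 3 := by ring
  rw [e]
  linear_combination (-(q^j*x) + (q^j*x)^2*w) * hw - (q^j*x)^3 * hw3

lemma jtheta_eq {q : ℂ} (hq : ‖q‖ < 1) (x : ℂ) : jtheta x q = qf q x * qf q (q * x⁻¹) := by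
  unfold jtheta qf
  rw [← (qf_mult hq x).tprod_mul (qf_mult hq (q * x⁻¹))]
  apply tprod_congr; intro j; ring

lemma jtheta_inv {q : ℂ} (hq : ‖q‖ < 1) {x : ℂ} (hx : x ≠ 0) :
    jtheta x⁻¹ q = -(x⁻¹ * jtheta x q) := by
  rw [jtheta_eq hq, jtheta_eq hq, qf_step hq x, qf_step hq x⁻¹, inv_inv]
  field_simp
  ring

lemma jtheta_refl {q : ℂ} (hq : ‖q‖ < 1) (hq0 : q ≠ 0) {x : ℂ} (hx : x ≠ 0) :
    jtheta (q * x⁻¹) q = jtheta x q := by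
  rw [jtheta_eq hq, jtheta_eq hq, mul_comm]
  congr 2
  field_simp

lemma jtheta_dup {p : ℂ} (hp : ‖p‖ < 1) (hp0 : p ≠ 0) {x : ℂ} (hx : x ≠ 0) :
    jtheta x (p ^ 2) * jtheta (p * x) (p ^ 2) = jtheta x p := by
  rw [jtheta_eq (norm_sq_lt hp), jtheta_eq (norm_sq_lt hp), jtheta_eq hp,
    ← qf_split hp x, ← qf_split hp (p * x⁻¹)]
  have e : p ^ 2 * (p * x)⁻¹ = p * x⁻¹ := by field_simp
  have e' : p * (p * x⁻¹) = p ^ 2 * x⁻¹ := by ring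
  rw [e, e']
  ring

lemma jtheta_neg {q : ℂ} (hq : ‖q‖ < 1) (x : ℂ) :
    jtheta x q * jtheta (-x) q = jtheta (x ^ 2) (q ^ 2) := by
  rw [jtheta_eq hq, jtheta_eq hq, jtheta_eq (norm_sq_lt hq), ← qf_neg hq x]
  have e : q ^ 2 * (x ^ 2)⁻¹ = (q * x⁻¹) ^ 2 := by rw [mul_pow, inv_pow]
  rw [e, ← qf_neg hq (q * x⁻¹), inv_neg, mul_neg]
  ring

/-- Theta at the three nontrivial half periods. -/
lemma jtheta_half {p : ℂ} (hp : ‖p‖ < 1) (hp0 : p ≠ 0) :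
    jtheta (-1) (p ^ 2) * jtheta (-p) (p ^ 2) * jtheta p (p ^ 2) = 2 := by
  have hq := norm_sq_lt hp
  rw [jtheta_eq hq, jtheta_eq hq, jtheta_eq hq]
  have e1 : p ^ 2 * (-1)⁻¹ = - p ^ 2 := by norm_num
  have e2 : p ^ 2 * (-p)⁻¹ = - p := by field_simp
  have e3 : p ^ 2 * (p)⁻¹ = p := by field_simp
  rw [e1, e2, e3, qf_step hq (-1)]
  have h1 := qf_neg hq p
  have h2 := qf_split hq (p ^ 2)
  have h3 := qf_neg hq (p ^ 2)
  have h0 := qf_self_ne_zero hq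
  have e4 : p ^ 2 * -1 = - p ^ 2 := by ring
  have e5 : p ^ 2 * p ^ 2 = (p ^ 2) ^ 2 := by ring
  rw [e4]
  rw [e5, ← h3, ← h1] at h2
  have h5 : qf (p ^ 2) p * qf (p ^ 2) (-p) * qf (p ^ 2) (-p ^ 2) = 1 := by
    apply mul_left_cancel₀ h0
    linear_combination h2
  linear_combination 2 * (qf (p ^ 2) p * qf (p ^ 2) (-p) * qf (p ^ 2) (-p ^ 2) + 1) * h5

lemma jtheta_third {q w : ℂ} (hq : ‖q‖ < 1) (hw : w ^ 2 + w + 1 = 0) :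
    jtheta w q * qf q q = (1 - w) * qf (q ^ 3) (q ^ 3) := by
  have hw3 : w ^ 3 = 1 := by linear_combination (w - 1) * hw
  have hw0 : w ≠ 0 := by rintro rfl; simp at hw
  rw [← qf_cube hq hw, jtheta_eq hq, qf_step hq w]
  have e : q * w⁻¹ = w ^ 2 * q := by field_simp; linear_combination -q * hw3
  rw [e, mul_comm q w]
  ring

lemma jtheta_third_half {p w : ℂ} (hp : ‖p‖ < 1) (hp0 : p ≠ 0) (hw : w ^ 2 + w + 1 = 0) :
    jtheta (-w) (p ^ 2) * jtheta (-(p * w)) (p ^ 2) * jtheta (p * w) (p ^ 2) = - w ^ 2 := by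
  have hw3 : w ^ 3 = 1 := by linear_combination (w - 1) * hw
  have hw0 : w ≠ 0 := by rintro rfl; simp at hw
  have hq := norm_sq_lt hp
  have h1 : jtheta w (p ^ 2) ≠ 0 := by
    have := jtheta_third hq hw
    intro h
    rw [h, zero_mul] at this
    rcases mul_eq_zero.mp this.symm with h | h
    · have : w = 1 := (sub_eq_zero.mp h).symm
      rw [this] at hw; norm_num at hw
    · exact qf_self_ne_zero (norm_cube_lt hq) h
  have ha := jtheta_dup hp hp0 hw0
  have hb := jtheta_dup hp hp0 (neg_ne_zero.mpr hw0)
  have hc := jtheta_neg hp w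
  have hd := jtheta_inv hq hw0
  have e : w⁻¹ = w ^ 2 := by field_simp; exact hw3.symm
  rw [e] at hd
  rw [← ha, ← hb, hd, mul_neg] at hc
  apply mul_left_cancel₀ h1
  linear_combination hc
/-! ### Jacobi triple product -/

/-- finite q-factorial -/
noncomputable def qq (q : ℂ) (n : ℕ) : ℂ := ∏ j ∈ Finset.range n, (1 - q ^ (j + 1))

/-- reciprocal q-factorial, extended by zero -/
noncomputable def rq (q : ℂ) (m : ℤ) : ℂ := if m < 0 then 0 else (qq q m.toNat)⁻¹

lemma qq_ne_zero {q : ℂ} (hq : ‖q‖ < 1) (n : ℕ) : qq q n ≠ 0 :=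
  Finset.prod_ne_zero_iff.mpr fun j _ => one_sub_qpow_ne hq j

lemma rq_rec {q : ℂ} (hq : ‖q‖ < 1) (m : ℤ) : rq q (m - 1) = (1 - q ^ m) * rq q m := by
  rcases lt_trichotomy m 0 with h | h | h
  · simp [rq, h, show m - 1 < 0 by omega]
  · subst h; simp [rq]
  · obtain ⟨n, rfl⟩ : ∃ n : ℕ, m = n + 1 := ⟨(m-1).toNat, by omega⟩
    have h1 : ¬ ((n:ℤ) + 1 < 0) := by omega
    have h2 : ((n:ℤ) + 1).toNat = n + 1 := by omega
    have h3 : (q : ℂ) ^ ((n:ℤ) + 1) = q ^ (n+1) := by exact_mod_cast zpow_natCast q (n+1)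
    simp only [rq, add_sub_cancel_right, h1, if_false, h2, h3]
    have := one_sub_qpow_ne hq n
    have h4 := qq_ne_zero hq n
    have h5 : ¬ ((n:ℤ) < 0) := by omega
    simp only [Int.toNat_natCast, qq, Finset.prod_range_succ] at h4 ⊢
    simp only [h5, if_false]
    field_simp

lemma tendsto_qq {q : ℂ} (hq : ‖q‖ < 1) :
    Filter.Tendsto (qq q) Filter.atTop (nhds (qf q q)) := by
  have := (qf_mult hq q).hasProd.tendsto_prod_nat
  refine this.congr fun n => ?_
  unfold qq
  exact Finset.prod_congr rfl fun j _ => by rw [pow_succ]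

lemma tendsto_rq {q : ℂ} (hq : ‖q‖ < 1) :
    Filter.Tendsto (rq q) Filter.atTop (nhds (qf q q)⁻¹) := by
  have h := ((tendsto_qq hq).inv₀ (qf_self_ne_zero hq)).comp
    (Filter.tendsto_atTop_atTop.mpr fun b => ⟨(b:ℤ), fun a ha => by omega⟩ :
      Filter.Tendsto Int.toNat Filter.atTop Filter.atTop)
  refine h.congr' ?_
  filter_upwards [Filter.eventually_ge_atTop 0] with m hm
  simp [rq, not_lt.mpr hm]

lemma rq_bdd {q : ℂ} (hq : ‖q‖ < 1) : ∃ C : ℝ, 0 ≤ C ∧ ∀ m, ‖rq q m‖ ≤ C := by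
  obtain ⟨C, hC⟩ := ((tendsto_qq hq).inv₀ (qf_self_ne_zero hq)).norm.bddAbove_range
  have hC' : ∀ n, ‖(qq q n)⁻¹‖ ≤ C := fun n => hC ⟨n, rfl⟩
  have h0 : 0 ≤ C := (norm_nonneg _).trans (hC' 0)
  refine ⟨C, h0, fun m => ?_⟩
  unfold rq
  split_ifs
  · simpa
  · exact hC' _

lemma finite_jtp {q x : ℂ} (hq : ‖q‖ < 1) (hq0 : q ≠ 0) (hx : x ≠ 0) (g : ℤ → ℂ)
    (g0 : g 0 = 1) (hg : ∀ n, g (n + 1) = -(x * q ^ n * g n)) (N : ℕ) :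
    HasSum (fun n : ℤ => qq q (2 * N) * rq q (N + n) * rq q (N - n) * g n)
      (∏ j ∈ Finset.range N, ((1 - q ^ j * x) * (1 - q ^ (j + 1) * x⁻¹))) := by
  induction N with
  | zero =>
    have : (∏ j ∈ Finset.range 0, ((1 - q ^ j * x) * (1 - q ^ (j + 1) * x⁻¹)))
      = qq q (2 * 0) * rq q ((0:ℕ) + 0) * rq q ((0:ℕ) - 0) * g 0 := by simp [qq, rq, g0]
    rw [this]
    apply hasSum_single 0
    intro n hn
    rcases lt_or_gt_of_ne hn with h | h
    · simp [rq, h]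
    · simp [rq, h]
  | succ N ih =>
    have h1 := ih.mul_left (1 + q ^ (2 * N + 1))
    have h2 := ih.mul_left (-(q ^ N * x))
    have h3 := ih.mul_left (-(q ^ (N + 1) * x⁻¹))
    rw [← (Equiv.subRight (1:ℤ)).hasSum_iff] at h2
    rw [← (Equiv.addRight (1:ℤ)).hasSum_iff] at h3
    have h := (h1.add h2).add h3
    rw [Finset.prod_range_succ]
    convert h using 1
    · rfl
    · funext n
      simp only [Function.comp_apply, Equiv.subRight_apply, Equiv.coe_addRight]
      have hgm : x * g (n - 1) = - (q ^ (1 - n) * g n) := by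
        have := hg (n - 1)
        rw [sub_add_cancel] at this
        rw [this]
        have e : q ^ (1 - n) * q ^ (n - 1) = 1 := by
          rw [← zpow_add₀ hq0]; simp
        linear_combination -(x * g (n-1)) * e
      have hgp : x⁻¹ * g (n + 1) = - (q ^ n * g n) := by
        rw [hg n]; field_simp
      set a : ℤ := (N:ℤ) + 1 + n with ha
      set b : ℤ := (N:ℤ) + 1 - n with hb
      have e1 : ((N+1:ℕ):ℤ) + n = a := by push_cast; ring
      have e2 : ((N+1:ℕ):ℤ) - n = b := by push_cast; ring
      have e3 : (N:ℤ) + n = a - 1 := by rw [ha]; ring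
      have e4 : (N:ℤ) - n = b - 1 := by rw [hb]; ring
      have e5 : (N:ℤ) + (n - 1) = a - 1 - 1 := by rw [ha]; ring
      have e6 : (N:ℤ) - (n - 1) = b := by rw [hb]; ring
      have e7 : (N:ℤ) + (n + 1) = a := by rw [ha]; ring
      have e8 : (N:ℤ) - (n + 1) = b - 1 - 1 := by rw [hb]; ring
      rw [e1, e2, e3, e4, e5, e6, e7, e8, rq_rec hq (a - 1), rq_rec hq a, rq_rec hq (b - 1),
        rq_rec hq b, zpow_sub_one₀ hq0, zpow_sub_one₀ hq0]
      have hQ : qq q (2 * (N + 1)) = qq q (2 * N) * (1 - q ^ (2 * N + 1)) * (1 - q ^ (2 * N + 2)) := by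
        rw [show 2 * (N + 1) = 2 * N + 1 + 1 by ring]
        simp only [qq, Finset.prod_range_succ]
      have hB : q ^ N * q ^ (1 - n) = q ^ b := by
        rw [← zpow_natCast, ← zpow_add₀ hq0]; congr 1; rw [hb]; ring
      have hA : q ^ (N + 1) * q ^ n = q ^ a := by
        rw [← zpow_natCast, ← zpow_add₀ hq0]; congr 1
      have hAB : q ^ (2 * N + 2) = q ^ a * q ^ b := by
        rw [← zpow_natCast, ← zpow_add₀ hq0]; congr 1; rw [ha, hb]; push_cast; ring
      have hAB' : q ^ (2 * N + 1) = q ^ a * q ^ b * q⁻¹ := by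
        rw [← hAB]; field_simp; ring
      rw [hQ, hAB, hAB']
      have k2 : ∀ c : ℂ, -(q ^ N * x) * (c * g (n - 1)) = c * q ^ b * g n := by
        intro c; rw [← hB]; linear_combination -(q ^ N * c) * hgm
      have k3 : ∀ c : ℂ, -(q ^ (N+1) * x⁻¹) * (c * g (n + 1)) = c * q ^ a * g n := by
        intro c; rw [← hA]; linear_combination -(q ^ (N+1) * c) * hgp
      rw [k2, k3]
      ring
    · rw [show q ^ (2 * N + 1) = q ^ N * q ^ (N + 1) by ring]
      field_simp
      ring

lemma norm_nome_lt {τ : ℂ} (hτ : 0 < τ.im) : ‖cexp (2 * Real.pi * I * τ)‖ < 1 := by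
  rw [Complex.norm_exp]
  have : (2 * (Real.pi:ℂ) * I * τ).re = -(2 * Real.pi * τ.im) := by simp
  rw [this, Real.exp_lt_one_iff]
  have := Real.pi_pos
  have : 0 < 2 * Real.pi * τ.im := by positivity
  linarith

/-- Jacobi triple product. -/
theorem jtp {τ : ℂ} (hτ : 0 < τ.im) (z : ℂ) :
    qf (cexp (2 * Real.pi * I * τ)) (cexp (2 * Real.pi * I * τ)) *
      jtheta (cexp (2 * Real.pi * I * z)) (cexp (2 * Real.pi * I * τ))
      = jacobiTheta₂ (z + 1 / 2 - τ / 2) τ := by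
  set q := cexp (2 * Real.pi * I * τ) with hqd
  set x := cexp (2 * Real.pi * I * z) with hxd
  have hq : ‖q‖ < 1 := norm_nome_lt hτ
  have hq0 : q ≠ 0 := exp_ne_zero _
  have hx : x ≠ 0 := exp_ne_zero _
  set g : ℤ → ℂ := fun n => jacobiTheta₂_term n (z + 1 / 2 - τ / 2) τ with hgd
  have hgs := hasSum_jacobiTheta₂_term (z + 1 / 2 - τ / 2) hτ
  have g0 : g 0 = 1 := by simp [hgd, jacobiTheta₂_term]
  have hg : ∀ n, g (n + 1) = -(x * q ^ n * g n) := by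
    intro n
    have e1 : (-1 : ℂ) = cexp (Real.pi * I) := by rw [Complex.exp_pi_mul_I]
    rw [← neg_one_mul, e1]
    simp only [hgd, jacobiTheta₂_term, hqd, hxd]
    rw [← Complex.exp_int_mul, ← Complex.exp_add, ← Complex.exp_add, ← Complex.exp_add]
    congr 1
    push_cast
    ring
  have hfin := finite_jtp hq hq0 hx g g0 hg
  obtain ⟨C, hC0, hC⟩ := rq_bdd hq
  obtain ⟨D, hD⟩ := (tendsto_qq hq).norm.bddAbove_range
  have hD' : ∀ n, ‖qq q n‖ ≤ D := fun n => hD ⟨n, rfl⟩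
  have hQ := qf_self_ne_zero hq
  have hlim : Filter.Tendsto (fun N : ℕ => ∑' n : ℤ, qq q (2 * N) * rq q (N + n) * rq q (N - n) * g n)
      Filter.atTop (nhds (∑' n : ℤ, qf q q * (qf q q)⁻¹ * (qf q q)⁻¹ * g n)) := by
    apply tendsto_tsum_of_dominated_convergence (bound := fun n => D * C * C * ‖g n‖)
    · exact (hgs.summable.norm).mul_left _
    · intro n
      have hN : Filter.Tendsto (fun N : ℕ => (N : ℤ)) Filter.atTop Filter.atTop :=
        tendsto_natCast_atTop_atTop
      have h1 : Filter.Tendsto (fun N : ℕ => 2 * N) Filter.atTop Filter.atTop :=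
        Filter.tendsto_atTop_mono (fun N => by simp only [id]; omega) Filter.tendsto_id
      refine Filter.Tendsto.mul_const _ (Filter.Tendsto.mul (Filter.Tendsto.mul ?_ ?_) ?_)
      · exact (tendsto_qq hq).comp h1
      · exact (tendsto_rq hq).comp (Filter.tendsto_atTop_add_const_right _ n hN)
      · exact (tendsto_rq hq).comp (Filter.tendsto_atTop_add_const_right _ (-n) hN)
    · filter_upwards with N n
      rw [norm_mul, norm_mul, norm_mul]
      have := hD' (2 * N)
      have := hC (N + n)
      have := hC (N - n)
      have := (norm_nonneg _).trans (hD' 0)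
      gcongr
  have hprod : Filter.Tendsto (fun N : ℕ => ∏ j ∈ Finset.range N,
      ((1 - q ^ j * x) * (1 - q ^ (j + 1) * x⁻¹))) Filter.atTop (nhds (jtheta x q)) := by
    have h1 := qf_mult hq x
    have h2 := qf_mult hq (q * x⁻¹)
    have h3 : Multipliable fun j : ℕ => ((1 - q ^ j * x) * (1 - q ^ (j + 1) * x⁻¹)) := by
      convert h1.mul h2 using 2 with j
      ring
    exact h3.hasProd.tendsto_prod_nat
  have heq := tendsto_nhds_unique hprod (hlim.congr fun N => (hfin N).tsum_eq)
  have hg' : ∑' n, g n = jacobiTheta₂ (z + 1 / 2 - τ / 2) τ := hgs.tsum_eq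
  rw [heq, tsum_mul_left, hg', mul_inv_cancel₀ hQ, one_mul, mul_inv_cancel_left₀ hQ]
/-! ### Three-term relation -/

lemma jacobi_rank {τ : ℂ} (hτ : 0 < τ.im) (a b : ℂ) :
    jacobiTheta₂ (a + b) τ * jacobiTheta₂ (a - b) τ =
      jacobiTheta₂ (2 * a) (2 * τ) * jacobiTheta₂ (2 * b) (2 * τ) +
      cexp (2 * Real.pi * I * (a + b) + Real.pi * I * τ) *
        (jacobiTheta₂ (2 * a + τ) (2 * τ) * jacobiTheta₂ (2 * b + τ) (2 * τ)) := by
  have hτ2 : 0 < (2 * τ).im := by simpa using hτ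
  have key : ∀ {t : ℂ} (_ : 0 < t.im) (z w : ℂ),
      HasSum (fun x : ℤ × ℤ => jacobiTheta₂_term x.1 z t * jacobiTheta₂_term x.2 w t)
        (jacobiTheta₂ z t * jacobiTheta₂ w t) := by
    intro t ht z w
    have h1 := hasSum_jacobiTheta₂_term z ht
    have h2 := hasSum_jacobiTheta₂_term w ht
    have h3 : Summable (fun x : ℤ × ℤ => jacobiTheta₂_term x.1 z t * jacobiTheta₂_term x.2 w t) :=
      summable_mul_of_summable_norm (f := fun n => jacobiTheta₂_term n z t)
        (g := fun n => jacobiTheta₂_term n w t) h1.summable.norm h2.summable.norm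
    exact HasSum.mul (f := fun n => jacobiTheta₂_term n z t)
        (g := fun n => jacobiTheta₂_term n w t) h1 h2 h3
  have h := key hτ (a + b) (a - b)
  have h1 := key hτ2 (2 * a) (2 * b)
  have h2 := (key hτ2 (2 * a + τ) (2 * b + τ)).mul_left
    (cexp (2 * Real.pi * I * (a + b) + Real.pi * I * τ))
  set f := fun x : ℤ × ℤ => jacobiTheta₂_term x.1 (a + b) τ * jacobiTheta₂_term x.2 (a - b) τ
    with hf
  let e1 : ℤ × ℤ → ℤ × ℤ := fun x => (x.1 + x.2, x.1 - x.2)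
  let e2 : ℤ × ℤ → ℤ × ℤ := fun x => (x.1 + x.2 + 1, x.1 - x.2)
  have i1 : Function.Injective e1 := by
    rintro ⟨k, l⟩ ⟨k', l'⟩ hh
    simp only [e1, Prod.mk.injEq] at hh ⊢
    omega
  have i2 : Function.Injective e2 := by
    rintro ⟨k, l⟩ ⟨k', l'⟩ hh
    simp only [e2, Prod.mk.injEq] at hh ⊢
    omega
  have hc : IsCompl (Set.range e1) (Set.range e2) := by
    constructor
    · rw [Set.disjoint_left]
      rintro _ ⟨⟨k, l⟩, rfl⟩ ⟨⟨k', l'⟩, hh⟩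
      simp only [e1, e2, Prod.mk.injEq] at hh
      omega
    · rw [codisjoint_iff]
      refine Set.eq_univ_iff_forall.mpr ?_
      rintro ⟨m, n⟩
      rcases Int.even_or_odd (m + n) with ⟨c, hh⟩ | ⟨c, hh⟩
      · left
        exact ⟨(c, m - c), by simp only [e1, Prod.mk.injEq]; omega⟩
      · right
        exact ⟨(c, m - 1 - c), by simp only [e2, Prod.mk.injEq]; omega⟩
  have h1' : HasSum (f ∘ e1) (jacobiTheta₂ (2 * a) (2 * τ) * jacobiTheta₂ (2 * b) (2 * τ)) := by
    convert h1 using 1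
    funext x
    simp only [hf, e1, Function.comp_apply, jacobiTheta₂_term, ← Complex.exp_add]
    congr 1
    push_cast
    ring
  have h2' : HasSum (f ∘ e2) (cexp (2 * Real.pi * I * (a + b) + Real.pi * I * τ) *
        (jacobiTheta₂ (2 * a + τ) (2 * τ) * jacobiTheta₂ (2 * b + τ) (2 * τ))) := by
    convert h2 using 1
    · rfl
    funext x
    simp only [hf, e2, Function.comp_apply, jacobiTheta₂_term, ← Complex.exp_add]
    congr 1
    push_cast
    ring
  exact h.unique (HasSum.add_isCompl hc (i1.hasSum_range_iff.mpr h1') (i2.hasSum_range_iff.mpr h2'))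

lemma jtheta_rank {τ : ℂ} (hτ : 0 < τ.im) : ∃ α β γ δ : ℂ → ℂ, ∀ x y : ℂ, x ≠ 0 → y ≠ 0 →
    jtheta (x * y) (cexp (2 * Real.pi * I * τ)) * jtheta (x / y) (cexp (2 * Real.pi * I * τ))
      = α x * β y + γ x * δ y := by
  set q := cexp (2 * Real.pi * I * τ) with hq
  have hK := qf_self_ne_zero (norm_nome_lt hτ)
  rw [← hq] at hK
  set L : ℂ → ℂ := fun x => log x / (2 * Real.pi * I) with hL
  have hLx : ∀ x, x ≠ 0 → cexp (2 * Real.pi * I * L x) = x := by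
    intro x hx
    rw [hL]
    have : (2 * Real.pi * I : ℂ) ≠ 0 := Complex.two_pi_I_ne_zero
    simp only
    rw [mul_div_cancel₀ _ this, exp_log hx]
  refine ⟨fun x => (qf q q)⁻¹ ^ 2 * jacobiTheta₂ (2 * (L x + 1 / 2 - τ / 2)) (2 * τ),
    fun y => jacobiTheta₂ (2 * L y) (2 * τ),
    fun x => (qf q q)⁻¹ ^ 2 * (-x) * jacobiTheta₂ (2 * (L x + 1 / 2 - τ / 2) + τ) (2 * τ),
    fun y => y * jacobiTheta₂ (2 * L y + τ) (2 * τ), ?_⟩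
  intro x y hx hy
  have e1 : cexp (2 * Real.pi * I * (L x + L y)) = x * y := by
    rw [mul_add, Complex.exp_add, hLx x hx, hLx y hy]
  have e2 : cexp (2 * Real.pi * I * (L x - L y)) = x / y := by
    rw [mul_sub, Complex.exp_sub, hLx x hx, hLx y hy]
  have j1 := jtp hτ (L x + L y)
  have j2 := jtp hτ (L x - L y)
  rw [e1, ← hq] at j1
  rw [e2, ← hq] at j2
  have h := jacobi_rank hτ (L x + 1 / 2 - τ / 2) (L y)
  have e3 : cexp (2 * Real.pi * I * (L x + 1 / 2 - τ / 2 + L y) + Real.pi * I * τ)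
      = -(x * y) := by
    rw [← e1, ← neg_one_mul, ← Complex.exp_pi_mul_I, ← Complex.exp_add]
    congr 1
    ring
  rw [e3, show L x + 1 / 2 - τ / 2 + L y = L x + L y + 1 / 2 - τ / 2 by ring,
    show L x + 1 / 2 - τ / 2 - L y = L x - L y + 1 / 2 - τ / 2 by ring, ← j1, ← j2] at h
  have hK2 : (qf q q)⁻¹ * qf q q = 1 := inv_mul_cancel₀ hK
  simp only
  linear_combination (qf q q)⁻¹ ^ 2 * h - ((qf q q)⁻¹ * qf q q + 1) * (jtheta (x * y) q * jtheta (x / y) q) * hK2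

lemma pf_zero (a b c d : Fin 4 → ℂ)
    (h : ∀ i j, a j * b i + c j * d i = -(a i * b j + c i * d j)) :
    (a 0 * b 1 + c 0 * d 1) * (a 2 * b 3 + c 2 * d 3)
      + (a 0 * b 2 + c 0 * d 2) * (a 3 * b 1 + c 3 * d 1)
      + (a 0 * b 3 + c 0 * d 3) * (a 1 * b 2 + c 1 * d 2) = 0 := by
  have hd : ∀ g : Fin 4 → Fin 4 → ℂ, (∀ i j, g i j = a i * b j + c i * d j) →
      (g 0 0 * g 1 1 - g 0 1 * g 1 0) * (g 2 2 * g 3 3 - g 2 3 * g 3 2)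
      - (g 0 0 * g 1 2 - g 0 2 * g 1 0) * (g 2 1 * g 3 3 - g 2 3 * g 3 1)
      + (g 0 0 * g 1 3 - g 0 3 * g 1 0) * (g 2 1 * g 3 2 - g 2 2 * g 3 1)
      + (g 0 1 * g 1 2 - g 0 2 * g 1 1) * (g 2 0 * g 3 3 - g 2 3 * g 3 0)
      - (g 0 1 * g 1 3 - g 0 3 * g 1 1) * (g 2 0 * g 3 2 - g 2 2 * g 3 0)
      + (g 0 2 * g 1 3 - g 0 3 * g 1 2) * (g 2 0 * g 3 1 - g 2 1 * g 3 0) = 0 := by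
    intro g hg
    simp only [hg]
    ring
  obtain ⟨g, hg⟩ : ∃ g : Fin 4 → Fin 4 → ℂ, ∀ i j, g i j = a i * b j + c i * d j :=
    ⟨fun i j => a i * b j + c i * d j, fun _ _ => rfl⟩
  have hD := hd g hg
  have hs : ∀ i j, g j i = - g i j := fun i j => by rw [hg, hg]; exact h i j
  have hz : ∀ i, g i i = 0 := fun i => by linear_combination (1 / 2) * hs i i
  simp only [← hg]
  rw [hz, hz, hz, hz, hs 0 1, hs 0 2, hs 0 3, hs 1 2, hs 1 3, hs 2 3] at hD
  rw [hs 1 3]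
  have : (g 0 1 * g 2 3 + g 0 2 * -g 1 3 + g 0 3 * g 1 2) ^ 2 = 0 := by
    linear_combination hD
  exact pow_eq_zero_iff (two_ne_zero) |>.mp this

/-- The antisymmetric theta kernel. -/
noncomputable def tG (q x y : ℂ) : ℂ := x⁻¹ * (jtheta (x * y) q * jtheta (x / y) q)

lemma three_term {τ : ℂ} (hτ : 0 < τ.im) {x y u v : ℂ} (hx : x ≠ 0) (hy : y ≠ 0) (hu : u ≠ 0)
    (hv : v ≠ 0) {q : ℂ} (hq : q = cexp (2 * Real.pi * I * τ)) :
    tG q x y * tG q u v + tG q x u * tG q v y + tG q x v * tG q y u = 0 := by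
  obtain ⟨α, β, γ, δ, hr⟩ := jtheta_rank hτ
  rw [← hq] at hr
  have hq1 : ‖q‖ < 1 := hq ▸ norm_nome_lt hτ
  set w : Fin 4 → ℂ := ![x, y, u, v] with hw
  have hw0 : ∀ i, w i ≠ 0 := by
    intro i; fin_cases i <;> simp [hw, hx, hy, hu, hv]
  have hG : ∀ x y : ℂ, x ≠ 0 → y ≠ 0 →
      tG q x y = x⁻¹ * α x * β y + x⁻¹ * γ x * δ y := by
    intro x y hx hy
    rw [tG, hr x y hx hy]; ring
  have hanti : ∀ x y : ℂ, x ≠ 0 → y ≠ 0 → tG q y x = - tG q x y := by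
    intro x y hx hy
    have := jtheta_inv hq1 (div_ne_zero hx hy)
    rw [inv_div] at this
    rw [tG, tG, this, mul_comm y x]
    field_simp
  have := pf_zero (fun i => (w i)⁻¹ * α (w i)) (fun i => β (w i))
    (fun i => (w i)⁻¹ * γ (w i)) (fun i => δ (w i)) (by
      intro i j
      rw [← hG _ _ (hw0 i) (hw0 j), ← hG _ _ (hw0 j) (hw0 i)]
      exact hanti _ _ (hw0 i) (hw0 j))
  simp only [hw, Matrix.cons_val] at this
  rw [hG _ _ hx hy, hG _ _ hu hv, hG _ _ hx hu, hG _ _ hv hy, hG _ _ hx hv, hG _ _ hy hu]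
  exact this

/-! ### Special values and the modular equation -/

lemma tG_of {q x y xi a b : ℂ} (hy : y ≠ 0) (h1 : xi * x = 1) (ha : x * y = a)
    (hb : x = b * y) : tG q x y = xi * (jtheta a q * jtheta b q) := by
  have hx : x ≠ 0 := right_ne_zero_of_mul_eq_one h1
  have e1 : x⁻¹ = xi := by rw [eq_comm]; exact eq_inv_of_mul_eq_one_left h1
  have e2 : x / y = b := by rw [hb]; field_simp
  rw [tG, ha, e1, e2]

lemma tG_one {q y yi : ℂ} (hq : ‖q‖ < 1) (h1 : yi * y = 1) :
    tG q 1 y = -yi * jtheta y q ^ 2 := by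
  have hy : y ≠ 0 := right_ne_zero_of_mul_eq_one h1
  have e1 : y⁻¹ = yi := by rw [eq_comm]; exact eq_inv_of_mul_eq_one_left h1
  have := jtheta_inv hq hy
  rw [e1] at this
  rw [tG, one_mul, one_div, e1, this]
  ring

lemma theta_rels {τ p w : ℂ} (hτ : 0 < τ.im) (hp : p = cexp (Real.pi * I * τ))
    (hw : w ^ 2 + w + 1 = 0) {T2 T3 T4 t1 t2 t3 t4 : ℂ}
    (hT2 : T2 = jtheta (-1) (p ^ 2)) (hT3 : T3 = jtheta (-p) (p ^ 2))
    (hT4 : T4 = jtheta p (p ^ 2)) (ht1 : t1 = jtheta w (p ^ 2)) (ht2 : t2 = jtheta (-w) (p ^ 2))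
    (ht3 : t3 = jtheta (-(p * w)) (p ^ 2)) (ht4 : t4 = jtheta (p * w) (p ^ 2)) :
    (w ^ 2 * t1 ^ 2 * t3 ^ 2 + T2 ^ 2 * T4 * t4 - w ^ 2 * t2 ^ 2 * t4 ^ 2 = 0) ∧
    (p * w * t1 ^ 2 * t2 ^ 2 - t3 ^ 2 * t4 ^ 2 + T3 ^ 2 * T4 * t4 = 0) ∧
    (w * t2 * T2 * t3 ^ 2 - w ^ 2 * t1 ^ 2 * T4 * t4 - w ^ 2 * t2 ^ 2 * T3 * t3 = 0) ∧
    (-t3 ^ 2 * t4 * T4 - p * t1 ^ 2 * t2 * T2 + T3 * t3 * t4 ^ 2 = 0) := by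
  have hw3 : w ^ 3 = 1 := by linear_combination (w - 1) * hw
  have hw0 : w ≠ 0 := by rintro rfl; simp at hw
  have hp0 : p ≠ 0 := hp ▸ exp_ne_zero _
  have hq : p ^ 2 = cexp (2 * Real.pi * I * τ) := by
    rw [hp, ← Complex.exp_nat_mul]; congr 1; push_cast; ring
  have hq1 : ‖p ^ 2‖ < 1 := hq ▸ norm_nome_lt hτ
  have hq0 : p ^ 2 ≠ 0 := pow_ne_zero _ hp0
  obtain ⟨P, hP⟩ : ∃ P, P * p = 1 := ⟨p⁻¹, inv_mul_cancel₀ hp0⟩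
  have hP0 : P ≠ 0 := left_ne_zero_of_mul_eq_one hP
  -- inversion in a convenient form
  have inv' : ∀ x y : ℂ, x * y = 1 → jtheta x (p ^ 2) = -(x * jtheta y (p ^ 2)) := by
    intro x y h
    have hy : y ≠ 0 := right_ne_zero_of_mul_eq_one h
    have e1 : y⁻¹ = x := by rw [eq_comm]; exact eq_inv_of_mul_eq_one_left h
    have := jtheta_inv hq1 hy
    rwa [e1] at this
  have refl' : ∀ x y : ℂ, x * y = p ^ 2 → jtheta x (p ^ 2) = jtheta y (p ^ 2) := by
    intro x y h
    have hy : y ≠ 0 := by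
      rintro rfl
      exact hq0 (by rw [← h, mul_zero])
    have := jtheta_refl hq1 hq0 hy
    have e : p ^ 2 * y⁻¹ = x := by rw [← h, mul_inv_cancel_right₀ hy]
    rwa [e] at this
  have v1 : jtheta (w ^ 2) (p ^ 2) = -(w ^ 2 * t1) := by
    rw [ht1]; exact inv' _ _ (by linear_combination hw3)
  have v2 : jtheta (-w ^ 2) (p ^ 2) = w ^ 2 * t2 := by
    rw [ht2, inv' (-w ^ 2) (-w) (by linear_combination hw3)]; ring
  have v4 : jtheta (p * w ^ 2) (p ^ 2) = t4 := by
    rw [ht4]; exact refl' _ _ (by linear_combination p ^ 2 * hw3)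
  have v3 : jtheta (-(p * w ^ 2)) (p ^ 2) = t3 := by
    rw [ht3]; exact refl' _ _ (by linear_combination p ^ 2 * hw3)
  have v5 : jtheta (P * w ^ 2) (p ^ 2) = -(P * w ^ 2 * t4) := by
    rw [ht4]; exact inv' _ _ (by linear_combination w ^ 3 * hP + hw3)
  have v6 : jtheta P (p ^ 2) = -(P * T4) := by
    rw [hT4]; exact inv' _ _ hP
  have v7 : jtheta (p ^ 2 * w ^ 2) (p ^ 2) = t1 := by
    rw [ht1]; exact refl' _ _ (by linear_combination p ^ 2 * hw3)
  have v8 : jtheta (-p ^ 2) (p ^ 2) = T2 := by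
    rw [hT2]; exact refl' _ _ (by ring)
  have n1 : -(w ^ 2 * p) ≠ 0 := neg_ne_zero.mpr (mul_ne_zero (pow_ne_zero _ hw0) hp0)
  have n2 : (-1 : ℂ) ≠ 0 := by norm_num
  have n3 : -w ≠ 0 := neg_ne_zero.mpr hw0
  have n4 : -w ^ 2 ≠ 0 := neg_ne_zero.mpr (pow_ne_zero _ hw0)
  have n5 : -p ≠ 0 := neg_ne_zero.mpr hp0
  have n6 : w * p ≠ 0 := mul_ne_zero hw0 hp0
  -- values at 1
  have g1 : tG (p ^ 2) 1 (-(w ^ 2 * p)) = w * P * t3 ^ 2 := by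
    rw [tG_one hq1 (yi := -(w * P)) (by linear_combination w ^ 3 * hP + hw3), ← v3, mul_comm p]
    ring
  have g2 : tG (p ^ 2) 1 (-1) = T2 ^ 2 := by
    rw [tG_one hq1 (yi := -1) (by ring), hT2]; ring
  have g3 : tG (p ^ 2) 1 (-w) = w ^ 2 * t2 ^ 2 := by
    rw [tG_one hq1 (yi := -w ^ 2) (by linear_combination hw3), ht2]; ring
  have g4 : tG (p ^ 2) 1 (-w ^ 2) = w ^ 2 * t2 ^ 2 := by
    rw [tG_one hq1 (yi := -w) (by linear_combination hw3), v2]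
    linear_combination w ^ 2 * t2 ^ 2 * hw3
  have g5 : tG (p ^ 2) 1 (-p) = P * T3 ^ 2 := by
    rw [tG_one hq1 (yi := -P) (by linear_combination hP), hT3]; ring
  have g6 : tG (p ^ 2) 1 w = -(w ^ 2 * t1 ^ 2) := by
    rw [tG_one hq1 (yi := w ^ 2) (by linear_combination hw3), ht1]; ring
  have g7 : tG (p ^ 2) 1 (w * p) = -(w ^ 2 * P * t4 ^ 2) := by
    rw [tG_one hq1 (yi := w ^ 2 * P) (by linear_combination w ^ 3 * hP + hw3), ht4, mul_comm p]
    ring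
  -- other values
  have a1 : tG (p ^ 2) (-1) (-w) = w ^ 2 * t1 ^ 2 := by
    rw [tG_of (xi := -1) (a := w) (b := w ^ 2) n3 (by ring) (by ring)
      (by linear_combination hw3), v1, ← ht1]
    ring
  have a2 : tG (p ^ 2) (-w) (-(w ^ 2 * p)) = w * P * T4 * t4 := by
    rw [tG_of (xi := -w ^ 2) (a := p) (b := P * w ^ 2) n1 (by linear_combination hw3)
      (by linear_combination p * hw3) (by linear_combination w ^ 4 * hP + w * hw3), v5, ← hT4]
    linear_combination w * P * T4 * t4 * hw3
  have a3 : tG (p ^ 2) (-(w ^ 2 * p)) (-1) = -(w * P * t4 ^ 2) := by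
    rw [tG_of (xi := -(w * P)) (a := p * w ^ 2) (b := p * w ^ 2) n2
      (by linear_combination w ^ 3 * hP + hw3) (by ring) (by ring), v4]
    ring
  have b1 : tG (p ^ 2) (-(w ^ 2 * p)) (-p) = P * t1 ^ 2 := by
    rw [tG_of (xi := -(w * P)) (a := p ^ 2 * w ^ 2) (b := w ^ 2) n5
      (by linear_combination w ^ 3 * hP + hw3) (by ring) (by ring), v7, v1]
    linear_combination P * t1 ^ 2 * hw3
  have b2 : tG (p ^ 2) (-p) (-w ^ 2) = -(P * t4 ^ 2) := by
    rw [tG_of (xi := -P) (a := p * w ^ 2) (b := p * w) n4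
      (by linear_combination hP) (by ring) (by linear_combination p * hw3), v4, ← ht4]
    ring
  have b3 : tG (p ^ 2) (-w ^ 2) (-(w ^ 2 * p)) = w * P * t4 * T4 := by
    rw [tG_of (xi := -w) (a := p * w) (b := P) n1
      (by linear_combination hw3) (by linear_combination p * w * hw3)
      (by linear_combination w ^ 2 * hP), v6, ← ht4]
    ring
  have c1 : tG (p ^ 2) w (-w) = w * t2 * T2 := by
    rw [tG_of (xi := w ^ 2) (a := -w ^ 2) (b := -1) n3
      (by linear_combination hw3) (by ring) (by ring), v2, ← hT2]
    linear_combination w * t2 * T2 * hw3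
  have c3 : tG (p ^ 2) (-(w ^ 2 * p)) w = -(w * P * T3 * t3) := by
    rw [tG_of (xi := -(w * P)) (a := -p) (b := -(p * w)) hw0
      (by linear_combination w ^ 3 * hP + hw3) (by linear_combination -p * hw3) (by ring),
      ← hT3, ← ht3]
    ring
  have d1 : tG (p ^ 2) w (w * p) = -(w ^ 2 * P * t4 * T4) := by
    rw [tG_of (xi := w ^ 2) (a := p * w ^ 2) (b := P) n6
      (by linear_combination hw3) (by ring) (by linear_combination -w * hP), v4, v6]
    ring
  have d2 : tG (p ^ 2) (w * p) (-(w ^ 2 * p)) = w * P * T2 * t2 := by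
    rw [tG_of (xi := w ^ 2 * P) (a := -p ^ 2) (b := -w ^ 2) n1
      (by linear_combination w ^ 3 * hP + hw3) (by linear_combination -p ^ 2 * hw3)
      (by linear_combination -w * p * hw3), v8, v2]
    linear_combination w * P * T2 * t2 * hw3
  have A := three_term hτ one_ne_zero n1 n2 n3 hq
  have B := three_term hτ one_ne_zero n4 n1 n5 hq
  have C := three_term hτ one_ne_zero n1 hw0 n3 hq
  have D := three_term hτ one_ne_zero n1 hw0 n6 hq
  rw [g1, a1, g2, a2, g3, a3] at A
  rw [g4, b1, g1, b2, g5, b3] at B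
  rw [g1, c1, g6, a2, g3, c3] at C
  rw [g1, d1, g6, d2, g7, c3] at D
  have hwP : w * P ≠ 0 := mul_ne_zero hw0 hP0
  have hwPP : w * P * P ≠ 0 := mul_ne_zero hwP hP0
  refine ⟨?_, ?_, ?_, ?_⟩
  · apply mul_left_cancel₀ hwP
    linear_combination A
  · apply mul_left_cancel₀ hwPP
    linear_combination B + w ^ 2 * P * t1 ^ 2 * t2 ^ 2 * hP
  · apply mul_left_cancel₀ hwP
    linear_combination C
  · apply mul_left_cancel₀ (mul_ne_zero (pow_ne_zero 3 hw0) (mul_ne_zero hP0 hP0))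
    linear_combination D - w ^ 3 * P * t1 ^ 2 * t2 * T2 * hP

lemma alg_identity {p w T2 T3 T4 t1 t2 t3 t4 ζ : ℂ} (hw : w ^ 2 + w + 1 = 0)
    (A : w ^ 2 * t1 ^ 2 * t3 ^ 2 + T2 ^ 2 * T4 * t4 - w ^ 2 * t2 ^ 2 * t4 ^ 2 = 0)
    (B : p * w * t1 ^ 2 * t2 ^ 2 - t3 ^ 2 * t4 ^ 2 + T3 ^ 2 * T4 * t4 = 0)
    (C : w * t2 * T2 * t3 ^ 2 - w ^ 2 * t1 ^ 2 * T4 * t4 - w ^ 2 * t2 ^ 2 * T3 * t3 = 0)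
    (D : -t3 ^ 2 * t4 * T4 - p * t1 ^ 2 * t2 * T2 + T3 * t3 * t4 ^ 2 = 0)
    (N1 : T2 * T3 * T4 = 2) (N2 : t2 * t3 * t4 = -w ^ 2)
    (hζ : ζ * (T3 * t2) = w ^ 2 * T2 * t3) :
    (ζ - 1) * (ζ + 2) * (2 * ζ + 1) = -(p * t1 ^ 6) * (ζ * (ζ + 1)) := by
  have hw3 : w ^ 3 = 1 := by linear_combination (w - 1) * hw
  have hw0 : w ≠ 0 := by rintro rfl; simp at hw
  have hT3 : T3 ≠ 0 := by rintro rfl; norm_num at N1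
  have ht : t2 * t3 * t4 ≠ 0 := by rw [N2]; exact neg_ne_zero.mpr (pow_ne_zero _ hw0)
  have ht4 : t4 ≠ 0 := right_ne_zero_of_mul ht
  have ht3 : t3 ≠ 0 := right_ne_zero_of_mul (left_ne_zero_of_mul ht)
  have ht2 : t2 ≠ 0 := left_ne_zero_of_mul (left_ne_zero_of_mul ht)
  have h0 : T3 * t2 ≠ 0 := mul_ne_zero hT3 ht2
  have eA : (2 * ζ + 1) * (t2 ^ 2 * t4 ^ 2) = t1 ^ 2 * t3 ^ 2 := by
    apply mul_left_cancel₀ h0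
    linear_combination 2 * t2 ^ 2 * t4 ^ 2 * hζ - w * T3 * t2 * A + w * T2 * t2 * t4 * N1
      + 2 * w ^ 2 * T2 * t2 * t4 * N2
      - (T3 * t2 ^ 3 * t4 ^ 2 - T3 * t2 * t1 ^ 2 * t3 ^ 2 + 2 * w * T2 * t2 * t4) * hw3
  have eB : (ζ + 2) * (t3 ^ 2 * t4 ^ 2) = ζ * (p * w * t1 ^ 2 * t2 ^ 2) := by
    apply mul_left_cancel₀ h0
    linear_combination (t3 ^ 2 * t4 ^ 2 - p * w * t1 ^ 2 * t2 ^ 2) * hζ - w ^ 2 * T2 * t3 * B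
      + w ^ 2 * T3 * t3 * t4 * N1 + 2 * T3 * t3 * t4 * N2
  have eC : (ζ - 1) * (t2 ^ 2 * T3 * t3) = t1 ^ 2 * T4 * t4 := by
    apply mul_left_cancel₀ h0
    linear_combination t2 ^ 2 * T3 * t3 * hζ
      + T3 * t2 * (w * C + (t1 ^ 2 * T4 * t4 + t2 ^ 2 * T3 * t3) * hw3)
  have E : T3 * t4 + t3 * T4 - T2 * t3 ^ 2 * t4 ^ 2 = 0 := by
    linear_combination T2 * B + w * t2 * D - T3 * t4 * N1 - (w * T3 * t4 - w * t3 * T4) * N2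
      - (t3 * T4 - T3 * t4) * hw3
  have eD : (ζ + 1) * (T3 * t4) = -(t3 * T4) := by
    apply mul_left_cancel₀ h0
    linear_combination T3 * t4 * hζ + T3 * t2 * E + T3 * T2 * t3 * t4 * N2
  have hK : (t2 ^ 2 * T3 * t3) * (t3 ^ 2 * t4 ^ 2) * (t2 ^ 2 * t4 ^ 2) ≠ 0 := by positivity
  apply mul_left_cancel₀ hK
  have h1 : (t2 ^ 2 * T3 * t3) * (t3 ^ 2 * t4 ^ 2) * (t2 ^ 2 * t4 ^ 2)
      * ((ζ - 1) * (ζ + 2) * (2 * ζ + 1))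
      = (t1 ^ 2 * T4 * t4) * (ζ * (p * w * t1 ^ 2 * t2 ^ 2)) * (t1 ^ 2 * t3 ^ 2) := by
    rw [← eA, ← eB, ← eC]; ring
  rw [h1]
  have N3 : t2 ^ 2 * t3 ^ 2 * t4 ^ 2 = w := by
    linear_combination (t2 * t3 * t4 - w ^ 2) * N2 + w * hw3
  linear_combination (ζ * p * w * t1 ^ 6 * t4 * t2 ^ 2 * t3) * eD
    + (T3 * t3 * t2 ^ 2 * t4 ^ 2 * p * t1 ^ 6 * ζ * (ζ + 1)) * N3

/-! ### Analytic part -/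

lemma eta_eq_qf (τ : ℂ) : dedekindEta τ = cexp (Real.pi * I * τ / 12) *
    qf (cexp (2 * Real.pi * I * τ)) (cexp (2 * Real.pi * I * τ)) := by
  unfold dedekindEta qf
  congr 1
  apply tprod_congr
  intro j
  rw [← pow_succ, ← Complex.exp_nat_mul]
  congr 2
  push_cast
  ring

lemma eta_ne {τ : ℂ} (hτ : 0 < τ.im) : dedekindEta τ ≠ 0 := by
  rw [eta_eq_qf]
  exact mul_ne_zero (exp_ne_zero _) (qf_self_ne_zero (norm_nome_lt hτ))

lemma eta_eq_mathlib : dedekindEta = ModularForm.eta := by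
  funext τ
  unfold dedekindEta ModularForm.eta
  simp only [ModularForm.eta_q_eq_cexp]
  congr 1
  unfold Function.Periodic.qParam
  congr 1
  push_cast
  ring

lemma eta_diff {τ : ℂ} (hτ : 0 < τ.im) : DifferentiableAt ℂ dedekindEta τ := by
  rw [eta_eq_mathlib]
  exact ModularForm.differentiableAt_eta_of_mem_upperHalfPlaneSet hτ

lemma phi5_diff {τ : ℂ} (hτ : 0 < τ.im) : DifferentiableAt ℂ phi5 τ := by
  have h3 : 0 < (3 * τ).im := by simpa using hτ
  unfold phi5
  apply DifferentiableAt.fun_div _ (eta_diff hτ) (eta_ne hτ)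
  exact DifferentiableAt.comp (g := dedekindEta) (f := fun t : ℂ => 3 * t) τ (eta_diff h3)
    (by fun_prop)

lemma omega_rel : cexp (2 * Real.pi * I / 3) ^ 2 + cexp (2 * Real.pi * I / 3) + 1 = 0 := by
  have h := (Complex.isPrimitiveRoot_exp 3 (by norm_num)).geom_sum_eq_zero (by norm_num)
  simp only [Finset.sum_range_succ, Finset.sum_range_zero] at h
  push_cast at h
  linear_combination h

lemma modular_identity {τ : ℂ} (hτ : 0 < τ.im) :
    (hauptmodul τ - 1) * (hauptmodul τ + 2) * (2 * hauptmodul τ + 1)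
      = 27 * phi5 τ ^ 6 * (hauptmodul τ * (hauptmodul τ + 1)) := by
  obtain ⟨p, hp⟩ : ∃ p, p = cexp (Real.pi * I * τ) := ⟨_, rfl⟩
  obtain ⟨w, hwd⟩ : ∃ w, w = cexp (2 * Real.pi * I / 3) := ⟨_, rfl⟩
  have hw : w ^ 2 + w + 1 = 0 := hwd ▸ omega_rel
  have hw0 : w ≠ 0 := hwd ▸ exp_ne_zero _
  have hp0 : p ≠ 0 := hp ▸ exp_ne_zero _
  have hq : p ^ 2 = cexp (2 * Real.pi * I * τ) := by
    rw [hp, ← Complex.exp_nat_mul]; congr 1; push_cast; ring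
  have hq1 : ‖p ^ 2‖ < 1 := hq ▸ norm_nome_lt hτ
  have hp1 : ‖p‖ < 1 := by
    rw [norm_pow] at hq1
    exact (pow_lt_one_iff_of_nonneg (norm_nonneg _) two_ne_zero).mp hq1
  obtain ⟨A, B, C, D⟩ := theta_rels hτ hp hw rfl rfl rfl rfl rfl rfl rfl
  have N1 := jtheta_half hp1 hp0
  have N2 := jtheta_third_half hp1 hp0 hw
  have hT3 : jtheta (-p) (p ^ 2) ≠ 0 := by
    intro h; rw [h] at N1; norm_num at N1
  have ht2 : jtheta (-w) (p ^ 2) ≠ 0 := by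
    intro h; rw [h, zero_mul, zero_mul] at N2
    exact neg_ne_zero.mpr (pow_ne_zero 2 hw0) N2.symm
  have hz : hauptmodul τ * (jtheta (-p) (p ^ 2) * jtheta (-w) (p ^ 2))
      = w ^ 2 * jtheta (-1) (p ^ 2) * jtheta (-(p * w)) (p ^ 2) := by
    unfold hauptmodul
    simp only [← hp, ← hwd]
    exact div_mul_cancel₀ _ (mul_ne_zero hT3 ht2)
  rw [alg_identity hw A B C D N1 N2 hz]
  congr 1
  have hth := jtheta_third hq1 hw
  have hK := qf_self_ne_zero hq1
  have e3 : cexp (2 * Real.pi * I * (3 * τ)) = (p ^ 2) ^ 3 := by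
    rw [hq, ← Complex.exp_nat_mul]; congr 1; push_cast; ring
  have e4 : cexp (Real.pi * I * (3 * τ) / 12) ^ 6 = p * cexp (Real.pi * I * τ / 12) ^ 6 := by
    rw [hp, ← Complex.exp_nat_mul, ← Complex.exp_nat_mul, ← Complex.exp_add]
    congr 1; push_cast; ring
  have e5 : cexp (Real.pi * I * τ / 12) ≠ 0 := exp_ne_zero _
  unfold phi5
  rw [eta_eq_qf, eta_eq_qf, e3, ← hq, div_pow, mul_pow, mul_pow, e4]
  have e6 : (1 - w) ^ 6 = -27 := by
    have : (1 - w) ^ 2 = -3 * w := by linear_combination hw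
    have hw3 : w ^ 3 = 1 := by linear_combination (w - 1) * hw
    calc (1 - w) ^ 6 = ((1 - w) ^ 2) ^ 3 := by ring
      _ = -27 := by rw [this]; linear_combination (-27) * hw3
  have e7 : jtheta w (p ^ 2) ^ 6 * qf (p ^ 2) (p ^ 2) ^ 6
      = -27 * qf ((p ^ 2) ^ 3) ((p ^ 2) ^ 3) ^ 6 := by
    rw [← e6, ← mul_pow, ← mul_pow, hth]
  generalize qf ((p ^ 2) ^ 3) ((p ^ 2) ^ 3) = K3 at *
  field_simp
  linear_combination -e7

lemma jacobi_diff {f : ℂ → ℂ} {τ : ℂ} (hτ : 0 < τ.im) (hf : DifferentiableAt ℂ f τ) :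
    DifferentiableAt ℂ (fun t => jacobiTheta₂ (f t) t) τ := by
  have h := (hasFDerivAt_jacobiTheta₂ (f τ) hτ).differentiableAt
  exact DifferentiableAt.comp (g := fun x : ℂ × ℂ => jacobiTheta₂ x.1 x.2)
    (f := fun t => (f t, t)) τ h (hf.prodMk differentiableAt_id)

lemma theta_jacobi {τ : ℂ} (hτ : 0 < τ.im) {x z f : ℂ}
    (hx : cexp (2 * Real.pi * I * z) = x) (hf : z + 1 / 2 - τ / 2 = f) :
    jtheta x (cexp (Real.pi * I * τ) ^ 2) =
      jacobiTheta₂ f τ / qf (cexp (2 * Real.pi * I * τ)) (cexp (2 * Real.pi * I * τ)) := by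
  have hq : cexp (Real.pi * I * τ) ^ 2 = cexp (2 * Real.pi * I * τ) := by
    rw [← Complex.exp_nat_mul]; congr 1; push_cast; ring
  rw [hq, ← hf, ← jtp hτ z, hx, mul_div_cancel_left₀ _ (qf_self_ne_zero (norm_nome_lt hτ))]

lemma haupt_eq {τ : ℂ} (hτ : 0 < τ.im) : hauptmodul τ = cexp (2 * Real.pi * I / 3) ^ 2 *
    jacobiTheta₂ (1 - τ / 2) τ * jacobiTheta₂ (4 / 3) τ /
      (jacobiTheta₂ 1 τ * jacobiTheta₂ (4 / 3 - τ / 2) τ) := by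
  have hK := qf_self_ne_zero (norm_nome_lt hτ)
  have hpi : ∀ z, cexp (2 * Real.pi * I * (1 / 2 + z)) = -cexp (2 * Real.pi * I * z) := by
    intro z
    rw [← neg_one_mul, ← Complex.exp_pi_mul_I, ← Complex.exp_add]; congr 1; ring
  have h1 := theta_jacobi hτ (x := -1) (z := 1 / 2 + 0) (f := 1 - τ / 2)
    (by rw [hpi]; simp) (by ring)
  have h2 := theta_jacobi hτ (x := -cexp (Real.pi * I * τ)) (z := 1 / 2 + τ / 2) (f := 1)
    (by rw [hpi]; congr 2; ring) (by ring)
  have h3 := theta_jacobi hτ (x := -cexp (2 * Real.pi * I / 3)) (z := 1 / 2 + 1 / 3)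
    (f := 4 / 3 - τ / 2) (by rw [hpi]; congr 2; ring) (by ring)
  have h4 := theta_jacobi hτ (x := -(cexp (Real.pi * I * τ) * cexp (2 * Real.pi * I / 3)))
    (z := 1 / 2 + (1 / 3 + τ / 2)) (f := 4 / 3)
    (by rw [hpi, ← Complex.exp_add]; congr 2; ring) (by ring)
  unfold hauptmodul
  simp only
  rw [h1, h2, h3, h4]
  have aux : ∀ a b c d e K : ℂ, K ≠ 0 →
      a * (b / K) * (c / K) / ((d / K) * (e / K)) = a * b * c / (d * e) := by
    intro a b c d e K h
    rw [show a * (b / K) * (c / K) = a * b * c / (K * K) by ring,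
      show d / K * (e / K) = d * e / (K * K) by ring,
      div_div_div_cancel_right₀ (mul_ne_zero h h)]
  exact aux _ _ _ _ _ _ hK

lemma haupt_diff {τ : ℂ} (hτ : 0 < τ.im) (h0 : hauptmodul τ ≠ 0) :
    DifferentiableAt ℂ hauptmodul τ := by
  have hev : ∀ᶠ t in nhds τ, 0 < t.im :=
    (isOpen_lt continuous_const Complex.continuous_im).mem_nhds hτ
  have he := hev.mono fun t ht => haupt_eq ht
  have hd : jacobiTheta₂ 1 τ * jacobiTheta₂ (4 / 3 - τ / 2) τ ≠ 0 := by
    intro h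
    rw [haupt_eq hτ, h, div_zero] at h0
    exact h0 rfl
  refine DifferentiableAt.congr_of_eventuallyEq ?_ he
  refine DifferentiableAt.fun_div ?_ ?_ hd
  · exact ((jacobi_diff hτ (by fun_prop)).const_mul _).fun_mul (jacobi_diff hτ (by fun_prop))
  · exact (jacobi_diff hτ (by fun_prop)).fun_mul (jacobi_diff hτ (by fun_prop))

/-- logarithmic derivative of φ₅ in terms of the Hauptmodul ζ. -/
theorem phi5_logarithmic_derivative (τ : ℂ) (hτ : 0 < τ.im)
    (hζ : hauptmodul τ ∉ ({0, 1, -1, -2, -(1/2)} : Set ℂ)) :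
    deriv phi5 τ / phi5 τ
      = (hauptmodul τ ^ 2 + hauptmodul τ + 1) ^ 2
          / (3 * (2 * hauptmodul τ + 1) * hauptmodul τ * (hauptmodul τ + 1)
              * (hauptmodul τ - 1) * (hauptmodul τ + 2))
        * deriv hauptmodul τ := by
  have hz0 : hauptmodul τ ≠ 0 := fun h => hζ (by simp [h])
  have hz1 : hauptmodul τ - 1 ≠ 0 := fun h => hζ (by
    have h' : hauptmodul τ = 1 := by linear_combination h
    simp [h'])
  have hz2 : hauptmodul τ + 1 ≠ 0 := fun h => hζ (by
    have h' : hauptmodul τ = -1 := by linear_combination h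
    simp [h'])
  have hz3 : hauptmodul τ + 2 ≠ 0 := fun h => hζ (by
    have h' : hauptmodul τ = -2 := by linear_combination h
    simp [h'])
  have hz4 : 2 * hauptmodul τ + 1 ≠ 0 := fun h => hζ (by
    have h' : hauptmodul τ = -(1 / 2) := by linear_combination (1 / 2) * h
    simp [h'])
  have h3 : 0 < (3 * τ).im := by simpa using hτ
  have hφ : phi5 τ ≠ 0 := div_ne_zero (eta_ne h3) (eta_ne hτ)
  have dz := (haupt_diff hτ hz0).hasDerivAt
  have dφ := (phi5_diff hτ).hasDerivAt
  have hev : ∀ᶠ t in nhds τ, 0 < t.im :=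
    (isOpen_lt continuous_const Complex.continuous_im).mem_nhds hτ
  have he := hev.mono fun t ht => modular_identity ht
  have dL := ((dz.sub_const 1).fun_mul (dz.add_const 2)).fun_mul ((dz.const_mul 2).add_const 1)
  have dR := ((dφ.fun_pow 6).const_mul 27).fun_mul (dz.fun_mul (dz.add_const 1))
  have hd := dL.unique (dR.congr_of_eventuallyEq he)
  have hI := modular_identity hτ
  generalize hauptmodul τ = Z at *
  generalize deriv hauptmodul τ = Z' at *
  generalize phi5 τ = F at *
  generalize deriv phi5 τ = F' at *
  have hkey : 3 * F' * ((2 * Z + 1) * Z * (Z + 1) * (Z - 1) * (Z + 2))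
      = F * (Z ^ 2 + Z + 1) ^ 2 * Z' := by
    linear_combination (-(1 / 2) * (Z * (Z + 1)) * F) * hd
      + (3 * F' * (Z * (Z + 1)) + (1 / 2) * F * Z' * (2 * Z + 1)) * hI
  rw [div_mul_eq_mul_div, div_eq_div_iff hφ (by simp [*])]
  linear_combination hkey
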